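/- The integral solutions (X, Y) of the Mordell equation Y^2 = X^3 + 36504 are exactly (X, Y) = (30, 252) and (X, Y) = (30, −252), and the Mordell equation Y^2 = X^3 − 36504 has no integral solutions. -/

import Mathlib

/-- The maximal order of the cubic field generated by `θ^3 = 9θ + 18`,
with basis `1, θ, φ = θ^2/3`. -/
@[ext] structure CubicOrd where
  a : ℤ
  b : ℤ
  c : ℤ
  deriving DecidableEq

namespace CubicOrd

instance : Zero CubicOrd := ⟨⟨0, 0, 0⟩⟩
instance : One CubicOrd := ⟨⟨1, 0, 0⟩⟩
instance : Add CubicOrd := ⟨fun x y => ⟨x.a + y.a, x.b + y.b, x.c + y.c⟩⟩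
instance : Neg CubicOrd := ⟨fun x => ⟨-x.a, -x.b, -x.c⟩⟩
instance : Mul CubicOrd := ⟨fun x y =>
  ⟨x.a * y.a + 6 * (x.b * y.c + x.c * y.b),
   x.a * y.b + x.b * y.a + 3 * (x.b * y.c + x.c * y.b) + 2 * x.c * y.c,
   x.a * y.c + x.c * y.a + 3 * x.b * y.b + 3 * x.c * y.c⟩⟩

@[simp] theorem zero_a : (0 : CubicOrd).a = 0 := rfl
@[simp] theorem zero_b : (0 : CubicOrd).b = 0 := rfl
@[simp] theorem zero_c : (0 : CubicOrd).c = 0 := rfl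
@[simp] theorem one_a : (1 : CubicOrd).a = 1 := rfl
@[simp] theorem one_b : (1 : CubicOrd).b = 0 := rfl
@[simp] theorem one_c : (1 : CubicOrd).c = 0 := rfl
@[simp] theorem add_a (x y : CubicOrd) : (x + y).a = x.a + y.a := rfl
@[simp] theorem add_b (x y : CubicOrd) : (x + y).b = x.b + y.b := rfl
@[simp] theorem add_c (x y : CubicOrd) : (x + y).c = x.c + y.c := rfl
@[simp] theorem neg_a (x : CubicOrd) : (-x).a = -x.a := rfl
@[simp] theorem neg_b (x : CubicOrd) : (-x).b = -x.b := rfl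
@[simp] theorem neg_c (x : CubicOrd) : (-x).c = -x.c := rfl
@[simp] theorem mul_a (x y : CubicOrd) :
    (x * y).a = x.a * y.a + 6 * (x.b * y.c + x.c * y.b) := rfl
@[simp] theorem mul_b (x y : CubicOrd) : (x * y).b =
    x.a * y.b + x.b * y.a + 3 * (x.b * y.c + x.c * y.b) + 2 * x.c * y.c := rfl
@[simp] theorem mul_c (x y : CubicOrd) : (x * y).c =
    x.a * y.c + x.c * y.a + 3 * x.b * y.b + 3 * x.c * y.c := rfl

instance : CommRing CubicOrd where
  add_assoc x y z := by ext <;> simp <;> ring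
  zero_add x := by ext <;> simp
  add_zero x := by ext <;> simp
  add_comm x y := by ext <;> simp <;> ring
  neg_add_cancel x := by ext <;> simp
  mul_assoc x y z := by ext <;> simp <;> ring
  one_mul x := by ext <;> simp
  mul_one x := by ext <;> simp
  mul_comm x y := by ext <;> simp <;> ring
  left_distrib x y z := by ext <;> simp <;> ring
  right_distrib x y z := by ext <;> simp <;> ring
  zero_mul x := by ext <;> simp
  mul_zero x := by ext <;> simp
  nsmul := nsmulRec
  zsmul := zsmulRec

/-- The embedding of `ℤ`. -/
def ofInt (n : ℤ) : CubicOrd := ⟨n, 0, 0⟩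

@[simp] theorem ofInt_a (n : ℤ) : (ofInt n).a = n := rfl
@[simp] theorem ofInt_b (n : ℤ) : (ofInt n).b = 0 := rfl
@[simp] theorem ofInt_c (n : ℤ) : (ofInt n).c = 0 := rfl

theorem ofInt_mul (m n : ℤ) : ofInt (m * n) = ofInt m * ofInt n := by ext <;> simp
theorem ofInt_add (m n : ℤ) : ofInt (m + n) = ofInt m + ofInt n := by ext <;> simp

/-- The norm form. -/
def nm (x : CubicOrd) : ℤ :=
  x.a * ((x.a + 3 * x.c) ^ 2 - 3 * x.b * (3 * x.b + 2 * x.c))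
    - x.b * (6 * x.c * (x.a + 3 * x.c) - 18 * x.b ^ 2)
    + x.c * (6 * x.c * (3 * x.b + 2 * x.c) - 6 * x.b * (x.a + 3 * x.c))

theorem nm_mul (x y : CubicOrd) : nm (x * y) = nm x * nm y := by
  simp only [nm, mul_a, mul_b, mul_c]; ring

theorem nm_pow_one (x : CubicOrd) (hx : nm x = 1) (n : ℕ) : nm (x ^ n) = 1 := by
  induction n with
  | zero => simp [nm]
  | succ n ih => rw [pow_succ, nm_mul, ih, hx, mul_one]

/-- The real embedding attached to a real root `t`. -/
noncomputable def re (t : ℝ) (x : CubicOrd) : ℝ := x.a + x.b * t + x.c * (t ^ 2 / 3)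

theorem re_mul (t : ℝ) (ht : t ^ 3 = 9 * t + 18) (x y : CubicOrd) :
    re t (x * y) = re t x * re t y := by
  simp only [re, mul_a, mul_b, mul_c]
  push_cast
  linear_combination (-(x.b * y.c + x.c * y.b) / 3 - x.c * y.c * t / 9 : ℝ) * ht

theorem re_pow (t : ℝ) (ht : t ^ 3 = 9 * t + 18) (x : CubicOrd) (n : ℕ) :
    re t (x ^ n) = re t x ^ n := by
  induction n with
  | zero => simp [re]
  | succ n ih => rw [pow_succ, re_mul t ht, ih, pow_succ]

theorem nm_eq (t : ℝ) (ht : t ^ 3 = 9 * t + 18) (x : CubicOrd) :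
    (nm x : ℝ) = re t x * (((2 * x.a - t * x.b + x.c * (18 - t ^ 2) / 3) / 2) ^ 2
      + (3 * t ^ 2 / 4 - 9) * (x.b - x.c * t / 3) ^ 2) := by
  have h4 : t ^ 4 = 9 * t ^ 2 + 18 * t := by linear_combination t * ht
  have h5 : t ^ 5 = 81 * t + 162 + 18 * t ^ 2 := by linear_combination (t ^ 2 + 9) * ht
  have h6 : t ^ 6 = 81 * t ^ 2 + 324 * t + 324 := by
    linear_combination (t ^ 3 + 9 * t + 18) * ht
  simp only [nm, re]
  push_cast
  ring_nf
  simp only [h6, h4, ht]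
  ring

theorem exists_root : ∃ t : ℝ, t ^ 3 = 9 * t + 18 ∧ 3.72 < t ∧ t < 3.7201 := by
  have hc : ContinuousOn (fun t : ℝ => t ^ 3 - 9 * t - 18) (Set.Icc 3.72 3.7201) := by fun_prop
  have := intermediate_value_Ioo (by norm_num) hc
  obtain ⟨t, ht, h⟩ := this (show (0 : ℝ) ∈ _ by constructor <;> norm_num)
  exact ⟨t, by simp only at h; linarith, ht.1, ht.2⟩

/-- fundamental unit and its inverse -/
def eta : CubicOrd := ⟨1, 1, 1⟩
def etai : CubicOrd := ⟨1, 1, -1⟩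

theorem eta_mul : eta * etai = 1 := by ext <;> simp [eta, etai]

set_option maxRecDepth 10000 in
theorem box_key : ∀ c ∈ Finset.Ioo (-2 : ℤ) 4, ∀ b ∈ Finset.Ioo (-6 : ℤ) 8,
      ∀ a ∈ Finset.Ioo (-25 : ℤ) 25, nm ⟨a, b, c⟩ = 26 →
        (a = -1 ∧ b = 1 ∧ c = 0) ∨ (a = 2 ∧ b = 2 ∧ c = 1) ∨
        (a = -4 ∧ b = -1 ∧ c = 2) ∨ (a = 5 ∧ b = 3 ∧ c = 2) := by
    decide +kernel

set_option maxHeartbeats 1000000 in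
theorem box (t : ℝ) (ht : t ^ 3 = 9 * t + 18) (h1 : 3.72 < t) (h2 : t < 3.7201) (x : CubicOrd)
    (hn : nm x = 26) (hl : 2 ≤ re t x) (hu : re t x < 2 * re t eta) :
    x = ⟨-1, 1, 0⟩ ∨ x = ⟨2, 2, 1⟩ := by
  have hN := nm_eq t ht x
  rw [hn] at hN
  obtain ⟨a, b, c⟩ := x
  have hT1 : 13.838 < t ^ 2 := by nlinarith
  have hT2 : t ^ 2 < 13.84 := by nlinarith
  set y := re t ⟨a, b, c⟩ with hy
  have hye : y = a + b * t + c * (t ^ 2 / 3) := rfl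
  have hu' : y < 18.67 := by
    have : re t eta = 1 + t + t ^ 2 / 3 := by simp [re, eta]
    rw [this] at hu; linarith
  simp only at hN
  set p : ℝ := 2 * a - t * b + c * (18 - t ^ 2) / 3 with hp
  set q : ℝ := b - c * t / 3 with hq
  have hQ : (p / 2) ^ 2 + (3 * t ^ 2 / 4 - 9) * q ^ 2 ≤ 13 := by
    push_cast at hN
    by_contra hcon
    push Not at hcon
    nlinarith
  have hp2 : p ^ 2 ≤ 52 := by nlinarith [mul_nonneg (show 0 ≤ 3 * t ^ 2 / 4 - 9 by linarith) (sq_nonneg q)]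
  have hq2 : q ^ 2 ≤ 9.5 := by nlinarith [sq_nonneg p, sq_nonneg q]
  obtain ⟨hp3, hp4⟩ := abs_le.mp (abs_le_of_sq_le_sq (show p ^ 2 ≤ 7.22 ^ 2 by linarith) (by norm_num))
  obtain ⟨hq3, hq4⟩ := abs_le.mp (abs_le_of_sq_le_sq (show q ^ 2 ≤ 3.1 ^ 2 by linarith) (by norm_num))
  have hc : c * (2 * t ^ 2 - 6) = 2 * y - p - 3 * t * q := by
    rw [hye, hp, hq]; ring
  clear_value y p q
  have htq1 : -11.6 ≤ t * q := by nlinarith [mul_nonneg (show 0 ≤ t by linarith) (show 0 ≤ q + 3.1 by linarith)]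
  have htq2 : t * q ≤ 11.6 := by nlinarith [mul_nonneg (show 0 ≤ t by linarith) (show 0 ≤ 3.1 - q by linarith)]
  have hc1 : -2 < c := by
    by_contra h
    have h' : (c : ℝ) ≤ -2 := by exact_mod_cast not_lt.mp h
    have := mul_nonneg (show 0 ≤ 2 * t ^ 2 - 6 by linarith) (show (0 : ℝ) ≤ -2 - c by linarith)
    linarith
  have hc2 : c < 4 := by
    by_contra h
    have h' : (4 : ℝ) ≤ c := by exact_mod_cast not_lt.mp h
    have := mul_nonneg (show 0 ≤ 2 * t ^ 2 - 6 by linarith) (show (0 : ℝ) ≤ c - 4 by linarith)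
    linarith
  have hcR1 : (-1 : ℝ) ≤ c := by exact_mod_cast hc1
  have hcR2 : (c : ℝ) ≤ 3 := by exact_mod_cast Int.le_of_lt_add_one hc2
  have hct1 := mul_nonneg (show 0 ≤ t by linarith) (show (0 : ℝ) ≤ c + 1 by linarith)
  have hct2 := mul_nonneg (show 0 ≤ t by linarith) (show (0 : ℝ) ≤ 3 - c by linarith)
  have hbR1 : (-6 : ℝ) < b := by linarith
  have hbR2 : (b : ℝ) < 8 := by linarith
  have hb1 : -6 < b := by exact_mod_cast hbR1
  have hb2 : b < 8 := by exact_mod_cast hbR2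
  have hbt1 := mul_nonneg (show 0 ≤ t by linarith) (show (0 : ℝ) ≤ b + 6 by linarith)
  have hbt2 := mul_nonneg (show 0 ≤ t by linarith) (show (0 : ℝ) ≤ 8 - b by linarith)
  have hctt1 := mul_nonneg (show 0 ≤ 18 - t ^ 2 by linarith) (show (0 : ℝ) ≤ c + 1 by linarith)
  have hctt2 := mul_nonneg (show 0 ≤ 18 - t ^ 2 by linarith) (show (0 : ℝ) ≤ 3 - c by linarith)
  have ha1 : -25 < a := by
    have : (-25 : ℝ) < a := by linarith
    exact_mod_cast this
  have ha2 : a < 25 := by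
    have : (a : ℝ) < 25 := by linarith
    exact_mod_cast this
  rcases box_key c (Finset.mem_Ioo.mpr ⟨hc1, hc2⟩) b (Finset.mem_Ioo.mpr ⟨hb1, hb2⟩) a
    (Finset.mem_Ioo.mpr ⟨ha1, ha2⟩) hn with ⟨rfl, rfl, rfl⟩ | ⟨rfl, rfl, rfl⟩ | ⟨rfl, rfl, rfl⟩ |
      ⟨rfl, rfl, rfl⟩
  · exact Or.inl rfl
  · exact Or.inr rfl
  · exfalso; push_cast at hye; linarith
  · exfalso; push_cast at hye; linarith

theorem eta_re_mul (t : ℝ) (ht : t ^ 3 = 9 * t + 18) : re t eta * re t etai = 1 := by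
  rw [← re_mul t ht, eta_mul]; simp [re]

/-- Every element of norm `26` is a power of the unit times one of two elements. -/
theorem classify (x : CubicOrd) (hn : nm x = 26) :
    ∃ g : CubicOrd, (g = ⟨-1, 1, 0⟩ ∨ g = ⟨2, 2, 1⟩) ∧
      ∃ n : ℕ, x = g * eta ^ n ∨ x = g * etai ^ n := by
  obtain ⟨t, ht, h1, h2⟩ := exists_root
  have hN := nm_eq t ht x
  have hT1 : 13.838 < t ^ 2 := by nlinarith
  have hpos : 0 < re t x := by
    rw [hn] at hN
    by_contra h
    have h0 : 0 ≤ ((2 * x.a - t * x.b + x.c * (18 - t ^ 2) / 3) / 2 : ℝ) ^ 2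
      + (3 * t ^ 2 / 4 - 9) * (x.b - x.c * t / 3) ^ 2 :=
      add_nonneg (sq_nonneg _) (mul_nonneg (by linarith) (sq_nonneg _))
    have := mul_nonneg (show 0 ≤ - re t x by linarith) h0
    push_cast at hN
    linarith
  have he : 1 < re t eta := by
    have : re t eta = 1 + t + t ^ 2 / 3 := by simp [re, eta]
    rw [this]; linarith
  have hei := eta_re_mul t ht
  have he0 : 0 < re t eta := by linarith
  obtain ⟨k, hk1, hk2⟩ := exists_mem_Ico_zpow (show 0 < re t x / 2 by linarith) he
  have hnu : nm eta = 1 := by decide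
  have hnui : nm etai = 1 := by decide
  have hmul (n : ℕ) : etai ^ n * eta ^ n = 1 := by rw [← mul_pow, mul_comm, eta_mul, one_pow]
  have hmulR (n : ℕ) : re t etai ^ n * re t eta ^ n = 1 := by
    rw [← mul_pow, mul_comm, hei, one_pow]
  obtain ⟨n, rfl | rfl⟩ := k.eq_nat_or_neg
  · refine ⟨x * etai ^ n, ?_, n, Or.inl (by rw [mul_assoc, hmul, mul_one])⟩
    rw [zpow_add₀ he0.ne', zpow_one] at hk2
    rw [zpow_natCast] at hk1 hk2
    have hp : 0 < re t etai ^ n := by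
      have := hmulR n
      exact pos_of_mul_pos_left (by rw [this]; norm_num) (pow_pos he0 n).le
    refine box t ht h1 h2 _ (by rw [nm_mul, hn, nm_pow_one _ hnui, mul_one]) ?_ ?_
    · rw [re_mul t ht, re_pow t ht]
      have := mul_le_mul_of_nonneg_right hk1 hp.le
      linarith [hmulR n]
    · rw [re_mul t ht, re_pow t ht]
      have := mul_lt_mul_of_pos_right hk2 hp
      have h3 : re t eta ^ n * re t eta * re t etai ^ n = re t eta := by
        linear_combination re t eta * hmulR n
      linarith
  · refine ⟨x * eta ^ n, ?_, n, Or.inr (by rw [mul_assoc, mul_comm (eta ^ n), hmul, mul_one])⟩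
    rw [zpow_add₀ he0.ne', zpow_one] at hk2
    rw [zpow_neg, zpow_natCast] at hk1 hk2
    have hp := pow_pos he0 n
    refine box t ht h1 h2 _ (by rw [nm_mul, hn, nm_pow_one _ hnu, mul_one]) ?_ ?_
    · rw [re_mul t ht, re_pow t ht]
      have := mul_le_mul_of_nonneg_right hk1 hp.le
      rw [inv_mul_cancel₀ hp.ne'] at this
      linarith
    · rw [re_mul t ht, re_pow t ht]
      have := mul_lt_mul_of_pos_right hk2 hp
      have h3 : (re t eta ^ n)⁻¹ * re t eta * re t eta ^ n = re t eta := by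
        field_simp
      linarith

/-- `e ^ (3^k) = 1 + 3^k ξ` with `ξ` congruent to a fixed element modulo `3`. -/
theorem pow_three_pow (e z : CubicOrd) (he : e ^ 3 = 1 + ofInt 3 * z) (k : ℕ) :
    ∃ w : CubicOrd, e ^ (3 ^ (k + 1)) = 1 + ofInt (3 ^ (k + 1)) * (z + ofInt 3 * w) := by
  induction k with
  | zero => exact ⟨0, by simpa using he⟩
  | succ k ih =>
    obtain ⟨w, hw⟩ := ih
    set v := z + ofInt 3 * w with hv
    refine ⟨w + ofInt (3 ^ k) * v ^ 2 + ofInt (3 ^ (2 * k)) * v ^ 3, ?_⟩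
    rw [pow_succ 3 (k + 1), pow_mul, hw]
    have e3 : (3 : CubicOrd) = ofInt 3 := by
      have : (3 : CubicOrd) = 1 + 1 + 1 := by norm_num
      rw [this]; ext <;> simp
    have e1 : ofInt (3 ^ (k + 1)) = ofInt (3 ^ k) * 3 := by rw [pow_succ, ofInt_mul, e3]
    have e2 : ofInt (3 ^ (k + 1 + 1)) = ofInt (3 ^ k) * 9 := by
      rw [pow_succ, pow_succ, ofInt_mul, ofInt_mul, ← e3]; ring
    have e4 : ofInt (3 ^ (2 * k)) = ofInt (3 ^ k) ^ 2 := by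
      rw [pow_two, ← ofInt_mul]; congr 1; ring
    rw [e1, e2, e4, ← e3]
    rw [← e3] at hv
    have : z = v - 3 * w := by rw [hv]; ring
    rw [this]
    ring

theorem one_add_pow (u : CubicOrd) (m : ℕ) :
    ∃ w : CubicOrd, (1 + u) ^ m = 1 + ofInt m * u + u ^ 2 * w := by
  induction m with
  | zero => exact ⟨0, by ext <;> simp⟩
  | succ m ih =>
    obtain ⟨w, hw⟩ := ih
    refine ⟨ofInt m + w + u * w, ?_⟩
    rw [pow_succ, hw]
    push_cast
    rw [ofInt_add]
    have : ofInt 1 = 1 := rfl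
    rw [this]; ring

theorem skolem (e z : CubicOrd) (he : e ^ 3 = 1 + ofInt 3 * z)
    (h1 : ¬ (3 : ℤ) ∣ (⟨-1, 1, 0⟩ * e : CubicOrd).c)
    (h2 : ¬ (3 : ℤ) ∣ (⟨-1, 1, 0⟩ * e ^ 2 : CubicOrd).c)
    (h3 : ¬ (3 : ℤ) ∣ (⟨-1, 1, 0⟩ * z : CubicOrd).c)
    (n : ℕ) (hn : (⟨-1, 1, 0⟩ * e ^ n : CubicOrd).c = 0) : n = 0 := by
  by_contra hn0
  obtain ⟨k, m, hm, rfl⟩ := Nat.exists_eq_pow_mul_and_not_dvd hn0 3 (by norm_num)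
  rcases k with _ | k
  · rw [pow_zero, one_mul] at hn
    have hmod : ∃ w : CubicOrd, e ^ m = e ^ (m % 3) + ofInt 3 * w := by
      obtain ⟨w, hw⟩ := one_add_pow (ofInt 3 * z) (m / 3)
      refine ⟨e ^ (m % 3) * (ofInt (m / 3 : ℕ) * z + ofInt 3 * z ^ 2 * w), ?_⟩
      conv_lhs => rw [← Nat.mod_add_div m 3, pow_add, pow_mul, he, hw]
      ring
    obtain ⟨w, hw⟩ := hmod
    have h12 : m % 3 = 1 ∨ m % 3 = 2 := by omega
    rw [hw] at hn
    rcases h12 with h | h <;> rw [h] at hn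
    · rw [pow_one] at hn
      apply h1
      rw [mul_add] at hn
      simp at hn ⊢
      omega
    · apply h2
      rw [mul_add] at hn
      generalize e ^ 2 = f at *
      simp at hn ⊢
      omega
  · obtain ⟨w, hw⟩ := pow_three_pow e z he k
    rw [pow_mul, hw] at hn
    obtain ⟨w', hw'⟩ := one_add_pow (ofInt (3 ^ (k + 1)) * (z + ofInt 3 * w)) m
    rw [hw'] at hn
    have hE : ⟨-1, 1, 0⟩ * (1 + ofInt m * (ofInt (3 ^ (k + 1)) * (z + ofInt 3 * w)) +
        (ofInt (3 ^ (k + 1)) * (z + ofInt 3 * w)) ^ 2 * w') =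
        ⟨-1, 1, 0⟩ + ofInt (3 ^ (k + 1)) * (ofInt m * (⟨-1, 1, 0⟩ * z) +
          ofInt 3 * (ofInt m * ⟨-1, 1, 0⟩ * w + ofInt (3 ^ k) * ⟨-1, 1, 0⟩ *
            (z + ofInt 3 * w) ^ 2 * w')) := by
      have e1 : ofInt (3 ^ (k + 1)) = ofInt (3 ^ k) * ofInt 3 := by rw [pow_succ, ofInt_mul]
      rw [e1]; ring
    rw [hE] at hn
    have hc (s : ℤ) (x : CubicOrd) : (ofInt s * x).c = s * x.c := by simp
    rw [add_c, hc, add_c, hc, hc] at hn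
    have hne : (3 : ℤ) ^ (k + 1) ≠ 0 := by positivity
    simp only [zero_add, mul_eq_zero, hne, false_or] at hn
    have hd : (3 : ℤ) ∣ (m : ℤ) * (⟨-1, 1, 0⟩ * z : CubicOrd).c := ⟨_, by rw [eq_neg_of_add_eq_zero_left hn, ← mul_neg]⟩
    rcases Int.prime_three.dvd_or_dvd hd with h | h
    · exact hm (by exact_mod_cast h)
    · exact h3 h

theorem second (e z : CubicOrd) (he : e ^ 12 = 1 + ofInt 7 * z)
    (h : ∀ r ∈ Finset.range 12, ¬ (7 : ℤ) ∣ (⟨2, 2, 1⟩ * e ^ r : CubicOrd).c) (n : ℕ) :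
    (⟨2, 2, 1⟩ * e ^ n : CubicOrd).c ≠ 0 := by
  intro hn
  obtain ⟨w, hw⟩ := one_add_pow (ofInt 7 * z) (n / 12)
  have h0 : e ^ n = e ^ (n % 12) + ofInt 7 *
      (e ^ (n % 12) * (ofInt (n / 12 : ℕ) * z + ofInt 7 * z ^ 2 * w)) := by
    conv_lhs => rw [← Nat.mod_add_div n 12, pow_add, pow_mul, he, hw]
    ring
  apply h (n % 12) (Finset.mem_range.mpr (Nat.mod_lt _ (by norm_num)))
  rw [h0, mul_add] at hn
  generalize e ^ (n % 12) = f at *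
  generalize (f * (ofInt (n / 12 : ℕ) * z + ofInt 7 * z ^ 2 * w)) = g at *
  simp at hn ⊢
  omega

theorem thue (t u : ℤ) (h : t ^ 3 - 9 * t * u ^ 2 + 18 * u ^ 3 = 26) : t = -1 ∧ u = 1 := by
  obtain ⟨g, hg, n, hx⟩ := classify ⟨t, u, 0⟩ (by simp only [nm]; linarith)
  rcases hg with rfl | rfl
  · have hn0 : n = 0 := by
      rcases hx with hx | hx
      · exact skolem eta ⟨40, 31, 25⟩ (by decide) (by decide) (by decide) (by decide) n
          (by rw [← hx])
      · exact skolem etai ⟨8, -1, -1⟩ (by decide) (by decide) (by decide) (by decide) n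
          (by rw [← hx])
    subst hn0
    simp only [pow_zero, mul_one, or_self, CubicOrd.mk.injEq] at hx
    exact ⟨hx.1, hx.2.1⟩
  · exfalso
    rcases hx with hx | hx
    · exact second eta ⟨9284162952, 7137800436, 5756235852⟩ (by decide +kernel) (by decide +kernel) n
          (by rw [← hx])
    · exact second etai ⟨89592, -7284, -13548⟩ (by decide +kernel) (by decide +kernel) n
          (by rw [← hx])

end CubicOrd

namespace QuadAux

theorem cancel {d : ℤ} (n : ℤ) (hn : n ≠ 0) (z : ℤ√d) (h : (n : ℤ√d) * z = 0) : z = 0 := by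
  have h1 := congrArg Zsqrtd.re h
  have h2 := congrArg Zsqrtd.im h
  simp [hn] at h1 h2
  ext <;> simp [h1, h2]

/-- An ideal generated by two elements is principal up to the factor `K`. -/
theorem ideal_gen {d : ℤ} (K : ℤ)
    (happ : ∀ a b : ℤ√d, b ≠ 0 → ∃ (k : ℤ) (q : ℤ√d), k ∣ K ∧
      ((k : ℤ√d) * a - q * b).norm.natAbs < b.norm.natAbs)
    (X α : ℤ√d) (hX : X ≠ 0) :
    ∃ b f g h1 h2 : ℤ√d, b = X * f + α * g ∧ K * X = b * h1 ∧ K * α = b * h2 := by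
  classical
  have hex : ∃ n : ℕ, ∃ f g : ℤ√d, X * f + α * g ≠ 0 ∧ (X * f + α * g).norm.natAbs = n :=
    ⟨_, 1, 0, by simpa using hX, rfl⟩
  obtain ⟨f, g, hne, hn⟩ := Nat.find_spec hex
  have hmin : ∀ f' g' : ℤ√d, (X * f' + α * g').norm.natAbs < (X * f + α * g).norm.natAbs →
      X * f' + α * g' = 0 := by
    intro f' g' h
    by_contra h0
    rw [hn] at h
    exact Nat.find_min hex h ⟨f', g', h0, rfl⟩
  have hdiv : ∀ f' g' : ℤ√d, ∃ h : ℤ√d, K * (X * f' + α * g') = (X * f + α * g) * h := by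
    intro f' g'
    obtain ⟨k, q, ⟨l, hl⟩, hlt⟩ := happ (X * f' + α * g') _ hne
    have e : (k : ℤ√d) * (X * f' + α * g') - q * (X * f + α * g) =
      X * (k * f' - q * f) + α * (k * g' - q * g) := by ring
    rw [e] at hlt
    have h0 := hmin _ _ hlt
    refine ⟨l * q, ?_⟩
    rw [hl]
    push_cast
    linear_combination (l : ℤ√d) * h0
  obtain ⟨h1, hh1⟩ := hdiv 1 0
  obtain ⟨h2, hh2⟩ := hdiv 0 1
  exact ⟨_, f, g, h1, h2, rfl, by simpa using hh1, by simpa using hh2⟩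

theorem rat_approx_pos (r s : ℚ) : ∃ x y : ℤ, |(r - x) ^ 2 - 6 * (s - y) ^ 2| < 1 := by
  have hv := abs_le.mp (abs_sub_round s)
  have hu := abs_le.mp (abs_sub_round r)
  set v := s - round s with hvd
  set u := r - round r with hud
  have hT : v ^ 2 ≤ 1 / 4 := by nlinarith
  have hU : u ^ 2 ≤ 1 / 4 := by nlinarith
  by_cases h : 6 * v ^ 2 < 1 + u ^ 2
  · refine ⟨round r, round s, ?_⟩
    rw [← hvd, ← hud, abs_lt]
    constructor <;> nlinarith [sq_nonneg v]
  · push Not at h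
    have hirr : 6 * v ^ 2 ≠ 5 / 4 := by
      intro h5
      have : IsSquare ((30 : ℕ) : ℚ) := ⟨12 * v, by push_cast; linarith⟩
      rw [Rat.isSquare_natCast_iff] at this
      obtain ⟨k, hk⟩ := this
      have : k < 6 := by nlinarith
      interval_cases k <;> omega
    rcases le_total 0 u with h0 | h0
    · refine ⟨round r - 1, round s, ?_⟩
      push_cast
      rw [← hvd, show r - (round r - 1) = u + 1 by rw [hud]; ring, abs_lt]
      refine ⟨by nlinarith, ?_⟩
      rcases lt_or_eq_of_le hu.2 with h1 | h1
      · nlinarith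
      · rw [h1] at h ⊢
        have := lt_of_le_of_ne h (by intro h'; apply hirr; rw [← h']; norm_num)
        linarith
    · refine ⟨round r + 1, round s, ?_⟩
      push_cast
      rw [← hvd, show r - (round r + 1) = u - 1 by rw [hud]; ring, abs_lt]
      refine ⟨by nlinarith, ?_⟩
      rcases lt_or_eq_of_le hu.1 with h1 | h1
      · nlinarith
      · rw [← h1] at h ⊢
        have := lt_of_le_of_ne h (by intro h'; apply hirr; rw [← h']; norm_num)
        linarith

theorem rat_approx_neg (r s : ℚ) : ∃ k : ℤ, k ∣ 2 ∧ ∃ x y : ℤ,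
    (k * r - x) ^ 2 + 6 * (k * s - y) ^ 2 < 1 := by
  have hv := abs_le.mp (abs_sub_round s)
  by_cases h : 8 * (s - round s) ^ 2 < 1
  · refine ⟨1, by norm_num, round r, round s, ?_⟩
    have hu := abs_le.mp (abs_sub_round r)
    push_cast
    rw [one_mul, one_mul]
    nlinarith
  · have hu := abs_le.mp (abs_sub_round (2 * r))
    push Not at h
    rcases le_total 0 (s - round s) with h0 | h0
    · refine ⟨2, by norm_num, round (2 * r), 2 * round s + 1, ?_⟩
      push_cast
      have : 0.35 ≤ s - round s := by nlinarith
      have h2 : 2 * s - (2 * round s + 1) = 2 * (s - round s) - 1 := by ring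
      rw [h2]
      nlinarith
    · refine ⟨2, by norm_num, round (2 * r), 2 * round s - 1, ?_⟩
      push_cast
      have : s - round s ≤ -0.35 := by nlinarith
      have h2 : 2 * s - (2 * round s - 1) = 2 * (s - round s) + 1 := by ring
      rw [h2]
      nlinarith

theorem norm_ne_pos (b : ℤ√6) (hb : b ≠ 0) : b.norm ≠ 0 := by
  intro h
  apply hb
  rw [Zsqrtd.norm_def] at h
  have him : b.im = 0 := by
    by_contra h0
    have h0' : (b.im : ℚ) ≠ 0 := by exact_mod_cast h0
    have : IsSquare ((6 : ℕ) : ℚ) := ⟨b.re / b.im, by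
      have : (b.re * b.re - 6 * b.im * b.im : ℚ) = 0 := by exact_mod_cast h
      field_simp
      push_cast
      linarith⟩
    rw [Rat.isSquare_natCast_iff] at this
    obtain ⟨k, hk⟩ := this
    have : k < 6 := by nlinarith
    interval_cases k <;> omega
  ext
  · simpa [him] using h
  · simpa using him

theorem norm_ne_neg (b : ℤ√(-6)) (hb : b ≠ 0) : b.norm ≠ 0 :=
  (Zsqrtd.norm_eq_zero_iff (by norm_num) b).not.mpr hb

theorem norm_diff {d : ℤ} (a b q : ℤ√d) (k : ℤ) :
    ((k : ℤ√d) * a - q * b).norm * b.norm =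
      (k * (a * star b).re - q.re * b.norm) ^ 2 - d * (k * (a * star b).im - q.im * b.norm) ^ 2 := by
  simp only [Zsqrtd.norm_def]
  simp
  ring

theorem app_pos (a b : ℤ√6) (hb : b ≠ 0) : ∃ (k : ℤ) (q : ℤ√6), k ∣ 1 ∧
      ((k : ℤ√6) * a - q * b).norm.natAbs < b.norm.natAbs := by
  have hN := norm_ne_pos b hb
  obtain ⟨x, y, h⟩ := rat_approx_pos ((a * star b).re / b.norm) ((a * star b).im / b.norm)
  refine ⟨1, ⟨x, y⟩, dvd_rfl, ?_⟩
  have hd := norm_diff a b ⟨x, y⟩ 1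
  generalize (((1 : ℤ) : ℤ√6) * a - ⟨x, y⟩ * b).norm = M at *
  generalize (a * star b).re = m at *
  generalize (a * star b).im = n at *
  generalize b.norm = N at *
  have hN' : (N : ℚ) ≠ 0 := by exact_mod_cast hN
  have hd' : (M * N : ℚ) = (1 * m - x * N) ^ 2 - 6 * (1 * n - y * N) ^ 2 := by exact_mod_cast hd
  have e : ((m : ℚ) / N - x) ^ 2 - 6 * (n / N - y) ^ 2 = M / N := by
    field_simp
    linarith
  rw [e, abs_div, div_lt_one (abs_pos.mpr hN')] at h
  have : |M| < |N| := by exact_mod_cast h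
  zify
  exact this

theorem app_neg (a b : ℤ√(-6)) (hb : b ≠ 0) : ∃ (k : ℤ) (q : ℤ√(-6)), k ∣ 2 ∧
      ((k : ℤ√(-6)) * a - q * b).norm.natAbs < b.norm.natAbs := by
  have hN := norm_ne_neg b hb
  obtain ⟨k, hk, x, y, h⟩ := rat_approx_neg ((a * star b).re / b.norm) ((a * star b).im / b.norm)
  refine ⟨k, ⟨x, y⟩, hk, ?_⟩
  have hd := norm_diff a b ⟨x, y⟩ k
  generalize ((k : ℤ√(-6)) * a - ⟨x, y⟩ * b).norm = M at *
  generalize (a * star b).re = m at *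
  generalize (a * star b).im = n at *
  generalize b.norm = N at *
  have hN' : (N : ℚ) ≠ 0 := by exact_mod_cast hN
  have hd' : (M * N : ℚ) = (k * m - x * N) ^ 2 - (-6) * (k * n - y * N) ^ 2 := by exact_mod_cast hd
  have e : (k * (m : ℚ) / N - x) ^ 2 + 6 * (k * n / N - y) ^ 2 = M / N := by
    field_simp
    linarith
  rw [← mul_div_assoc, ← mul_div_assoc, e] at h
  have h : |(M : ℚ) / N| < 1 := by
    rw [abs_of_nonneg]
    · exact h
    · rw [← e]; positivity
  rw [abs_div, div_lt_one (abs_pos.mpr hN')] at h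
  have : |M| < |N| := by exact_mod_cast h
  zify
  exact this

theorem cube_core {R : Type*} [CommRing R] (a A x s r t b f g h1 h2 : R)
    (hN : a * A = s * x ^ 3) (hs : s ^ 2 = 1) (hco : a * r + A * t = 1)
    (hb : b = x * f + a * g) (hx : x = b * h1) (ha : a = b * h2) :
    ∃ c e : R, b ^ 3 = a * c ∧ a = b ^ 3 * e := by
  refine ⟨s * A * f ^ 3 + 3 * x ^ 2 * f ^ 2 * g + 3 * x * f * g ^ 2 * a + a ^ 2 * g ^ 3,
    h2 ^ 3 * r ^ 2 + s * h1 ^ 3 * (2 * a * r * t + A * t ^ 2), ?_, ?_⟩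
  · rw [hb]
    linear_combination (-s * f ^ 3) * hN - x ^ 3 * f ^ 3 * hs
  · have e1 : a ^ 3 = b ^ 3 * h2 ^ 3 := by rw [← mul_pow, ← ha]
    have e2 : x ^ 3 = b ^ 3 * h1 ^ 3 := by rw [← mul_pow, ← hx]
    linear_combination (-a * (a * r + A * t + 1)) * hco + r ^ 2 * e1 +
      s * (2 * a * r * t + A * t ^ 2) * e2 + (2 * a * r * t + A * t ^ 2) * hN

end QuadAux
namespace QuadAux

theorem unit_form (e c : ℤ√6) (h : e * c = 1) :
    ∃ E B : ℤ√6, (E = 1 ∨ E = ⟨5, 2⟩ ∨ E = ⟨5, -2⟩) ∧ e = E * B ^ 3 := by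
  have hn : e.norm = 1 := by
    have h1 : e.norm * c.norm = 1 := by rw [← Zsqrtd.norm_mul, h, Zsqrtd.norm_one]
    rcases Int.eq_one_or_neg_one_of_mul_eq_one h1 with h2 | h2
    · exact h2
    · exfalso
      rw [Zsqrtd.norm_def] at h2
      have h3 : (e.re * e.re) % 3 = 2 := by
        have : e.re * e.re = 3 * (2 * e.im * e.im) - 1 := by linarith
        omega
      have h4 : e.re % 3 = 0 ∨ e.re % 3 = 1 ∨ e.re % 3 = 2 := by omega
      rcases h4 with h4 | h4 | h4 <;> simp [Int.mul_emod, h4] at h3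
  let a : Pell.Solution₁ 6 := Pell.Solution₁.mk e.re e.im (by
    rw [Zsqrtd.norm_def] at hn; linarith)
  let a1 : Pell.Solution₁ 6 := Pell.Solution₁.mk 5 2 (by norm_num)
  have hf : Pell.IsFundamental a1 := by
    refine ⟨by simp [a1], by simp [a1], ?_⟩
    intro b hb
    have hp := b.prop
    have : a1.x = 5 := rfl
    rw [this]
    by_contra hlt
    push Not at hlt
    generalize b.x = x at *
    generalize b.y = y at *
    have hy1 : y < 2 := by nlinarith
    have hy2 : -2 < y := by nlinarith
    interval_cases x <;> interval_cases y <;> omega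
  have hz : ∃ (E B : Pell.Solution₁ 6), (E = 1 ∨ E = a1 ∨ E = a1⁻¹) ∧ a = E * B ^ 3 := by
    obtain ⟨n, hn⟩ := hf.eq_zpow_or_neg_zpow a
    have hr : n % 3 = 0 ∨ n % 3 = 1 ∨ n % 3 = 2 := by omega
    have key : ∃ (E B : Pell.Solution₁ 6), (E = 1 ∨ E = a1 ∨ E = a1⁻¹) ∧ a1 ^ n = E * B ^ 3 := by
      rcases hr with hr | hr | hr
      · refine ⟨1, a1 ^ (n / 3), Or.inl rfl, ?_⟩
        rw [one_mul, ← zpow_natCast, ← zpow_mul]; congr 1; push_cast; omega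
      · refine ⟨a1, a1 ^ (n / 3), Or.inr (Or.inl rfl), ?_⟩
        rw [← zpow_natCast, ← zpow_mul, ← zpow_one_add]; congr 1; push_cast; omega
      · refine ⟨a1⁻¹, a1 ^ (n / 3 + 1), Or.inr (Or.inr rfl), ?_⟩
        rw [← zpow_natCast, ← zpow_mul, ← zpow_neg_one, ← zpow_add]; congr 1; push_cast; omega
    obtain ⟨E, B, hE, hB⟩ := key
    rcases hn with hn | hn
    · exact ⟨E, B, hE, hn.trans hB⟩
    · refine ⟨E, -B, hE, ?_⟩
      rw [hn, hB]
      apply Pell.Solution₁.ext <;> simp [pow_succ, Pell.Solution₁.x_mul, Pell.Solution₁.y_mul] <;> ring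
  obtain ⟨E, B, hE, hB⟩ := hz
  refine ⟨⟨E.x, E.y⟩, ⟨B.x, B.y⟩, ?_, ?_⟩
  · rcases hE with rfl | rfl | rfl
    · left; rfl
    · right; left; rfl
    · right; right; rfl
  · have h1 := congrArg Pell.Solution₁.x hB
    have h2 := congrArg Pell.Solution₁.y hB
    have hax : a.x = e.re := rfl
    have hay : a.y = e.im := rfl
    simp only [pow_succ, pow_zero, one_mul, Pell.Solution₁.x_mul, Pell.Solution₁.y_mul, hax, hay] at h1 h2
    ext
    · simp only [pow_succ, pow_zero, one_mul, Zsqrtd.re_mul, Zsqrtd.im_mul]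
      rw [h1]; ring
    · simp only [pow_succ, pow_zero, one_mul, Zsqrtd.re_mul, Zsqrtd.im_mul]
      rw [h2]; ring

theorem cop78 (x : ℤ) (h2 : ¬ (2 : ℤ) ∣ x) (h3 : ¬ (3 : ℤ) ∣ x) (h13 : ¬ (13 : ℤ) ∣ x) (m k j i : ℕ) :
    IsCoprime (x ^ m) (2 ^ i * 3 ^ j * 13 ^ k) := by
  have p13 : Prime (13 : ℤ) := by rw [← Int.prime_ofNat_iff.symm]; norm_num
  have c2 := ((Int.prime_two.coprime_iff_not_dvd).mpr h2).symm
  have c3 := ((Int.prime_three.coprime_iff_not_dvd).mpr h3).symm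
  have c13 := ((p13.coprime_iff_not_dvd).mpr h13).symm
  exact ((c2.pow.mul_right c3.pow).mul_right c13.pow)

/-- Extraction of the cube in `ℤ√6`. -/
theorem cube_pos (Y x s : ℤ) (δ a : ℤ√6) (hδ : (⟨Y, 78⟩ : ℤ√6) = δ ^ 3 * a)
    (hN0 : a.norm = s * x ^ 3) (hs : s = 1 ∨ s = -1)
    (h2 : ¬ (2 : ℤ) ∣ x) (h3 : ¬ (3 : ℤ) ∣ x) (h13 : ¬ (13 : ℤ) ∣ x) :
    ∃ E B : ℤ√6, (E = 1 ∨ E = ⟨5, 2⟩ ∨ E = ⟨5, -2⟩) ∧ (⟨Y, 78⟩ : ℤ√6) = E * B ^ 3 := by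
  have hx0 : x ≠ 0 := by rintro rfl; simp at h2
  have hN : a * star a = (s : ℤ√6) * (x : ℤ√6) ^ 3 := by
    rw [← Zsqrtd.norm_eq_mul_conj, hN0]; push_cast; rfl
  have hs2 : s ^ 2 = 1 := by rcases hs with rfl | rfl <;> norm_num
  have hs2' : (s : ℤ√6) ^ 2 = 1 := by exact_mod_cast congrArg (Int.cast : ℤ → ℤ√6) hs2
  obtain ⟨u, v, huv⟩ := cop78 x h2 h3 h13 3 1 2 3
  have huv' : (u : ℤ√6) * x ^ 3 + v * 936 = 1 := by
    have := congrArg (Int.cast : ℤ → ℤ√6) huv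
    push_cast at this
    linear_combination this
  have hst : (⟨Y, -78⟩ : ℤ√6) = star δ ^ 3 * star a := by
    have := congrArg star hδ
    simpa [mul_comm] using this
  have hw : (⟨0, 1⟩ : ℤ√6) * (⟨Y, 78⟩ - ⟨Y, -78⟩) = 936 := by
    ext <;> simp
  have hco : a * (u * s * star a + v * ⟨0, 1⟩ * δ ^ 3) + star a * (-v * ⟨0, 1⟩ * star δ ^ 3) = 1 := by
    rw [hδ, hst] at hw
    linear_combination (u * s : ℤ√6) * hN + u * x ^ 3 * hs2' + v * hw + huv'
  have hxz : (x : ℤ√6) ≠ 0 := by exact_mod_cast hx0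
  obtain ⟨b, f, g, h1, h2, hb, hx, ha⟩ := ideal_gen 1 app_pos (x : ℤ√6) a hxz
  rw [Int.cast_one, one_mul] at hx ha
  obtain ⟨c, e, hc, he⟩ := cube_core a (star a) (x : ℤ√6) s _ _ b f g h1 h2 hN hs2' hco hb hx ha
  have hec : e * c = 1 := by
    have h0 : ((s * x ^ 3 : ℤ) : ℤ√6) * (e * c - 1) = 0 := by
      push_cast
      rw [← hN]
      linear_combination (star a) * (-he - e * hc)
    have := cancel _ (by
      apply mul_ne_zero
      · rcases hs with rfl | rfl <;> norm_num
      · exact pow_ne_zero _ hx0) _ h0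
    linear_combination this
  obtain ⟨E, B, hE, hB⟩ := unit_form e c hec
  refine ⟨E, δ * b * B, hE, ?_⟩
  rw [hδ, he, hB]; ring

theorem not13 (X Y s : ℤ) (hs : s = 1 ∨ s = -1) (h : Y ^ 2 = X ^ 3 + s * 36504) : ¬ (13 : ℤ) ∣ X := by
  rintro ⟨x, rfl⟩
  have p13 : Prime (13 : ℤ) := by rw [← Int.prime_ofNat_iff.symm]; norm_num
  have hY : (13 : ℤ) ∣ Y := p13.dvd_of_dvd_pow (n := 2) ⟨169 * x ^ 3 + s * 2808, by rw [h]; ring⟩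
  obtain ⟨y, rfl⟩ := hY
  have h1 : y ^ 2 = 13 * x ^ 3 + 216 * s := by linarith
  have h2 : y ^ 2 % 13 = (216 * s) % 13 := by omega
  have h3 : y % 13 = 0 ∨ y % 13 = 1 ∨ y % 13 = 2 ∨ y % 13 = 3 ∨ y % 13 = 4 ∨ y % 13 = 5 ∨ y % 13 = 6
    ∨ y % 13 = 7 ∨ y % 13 = 8 ∨ y % 13 = 9 ∨ y % 13 = 10 ∨ y % 13 = 11 ∨ y % 13 = 12 := by omega
  rcases hs with rfl | rfl <;>
  rcases h3 with h3 | h3 | h3 | h3 | h3 | h3 | h3 | h3 | h3 | h3 | h3 | h3 | h3 <;>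
    simp [pow_two, Int.mul_emod, h3] at h2

theorem two_case (x Y s : ℤ) (hs : s = 1 ∨ s = -1) (h : Y ^ 2 = (2 * x) ^ 3 + s * 36504) :
    ∃ y, Y = 4 * y ∧ 2 * y ^ 2 = x ^ 3 + s * 4563 ∧ ¬ (2 : ℤ) ∣ x := by
  have h1 : (2 : ℤ) ∣ Y := Int.prime_two.dvd_of_dvd_pow (n := 2) ⟨4 * x ^ 3 + s * 18252, by rw [h]; ring⟩
  obtain ⟨z, rfl⟩ := h1
  have h2 : (2 : ℤ) ∣ z := Int.prime_two.dvd_of_dvd_pow (n := 2) ⟨x ^ 3 + s * 4563, by linarith⟩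
  obtain ⟨y, rfl⟩ := h2
  have h3 : 2 * y ^ 2 = x ^ 3 + s * 4563 := by linarith
  refine ⟨y, by ring, h3, ?_⟩
  rintro ⟨k, rfl⟩
  have : 2 * y ^ 2 = 8 * k ^ 3 + s * 4563 := by linarith
  rcases hs with rfl | rfl <;> omega

theorem three_case (x Y s : ℤ) (hs : s = 1 ∨ s = -1) (h : Y ^ 2 = (3 * x) ^ 3 + s * 36504) :
    ∃ y, Y = 9 * y ∧ 3 * y ^ 2 = x ^ 3 + s * 1352 ∧ ¬ (3 : ℤ) ∣ x := by
  have h1 : (3 : ℤ) ∣ Y := Int.prime_three.dvd_of_dvd_pow (n := 2) ⟨9 * x ^ 3 + s * 12168, by rw [h]; ring⟩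
  obtain ⟨z, rfl⟩ := h1
  have h2 : (3 : ℤ) ∣ z := Int.prime_three.dvd_of_dvd_pow (n := 2) ⟨x ^ 3 + s * 1352, by linarith⟩
  obtain ⟨y, rfl⟩ := h2
  have h3 : 3 * y ^ 2 = x ^ 3 + s * 1352 := by linarith
  refine ⟨y, by ring, h3, ?_⟩
  rintro ⟨k, rfl⟩
  have : 3 * y ^ 2 = 27 * k ^ 3 + s * 1352 := by linarith
  rcases hs with rfl | rfl <;> omega

theorem alpha_form (X Y : ℤ) (h : Y ^ 2 = X ^ 3 + 36504) :
    ∃ E B : ℤ√6, (E = 1 ∨ E = ⟨5, 2⟩ ∨ E = ⟨5, -2⟩) ∧ (⟨Y, 78⟩ : ℤ√6) = E * B ^ 3 := by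
  have h' : Y ^ 2 = X ^ 3 + 1 * 36504 := by linarith
  have h13 := not13 X Y 1 (Or.inl rfl) h'
  by_cases h2 : (2 : ℤ) ∣ X <;> by_cases h3 : (3 : ℤ) ∣ X
  · obtain ⟨x, rfl⟩ : (6 : ℤ) ∣ X := by omega
    obtain ⟨y1, hy1, -, hx2⟩ := two_case (3 * x) Y 1 (Or.inl rfl) (by linarith)
    obtain ⟨y2, hy2, -, hx3⟩ := three_case (2 * x) Y 1 (Or.inl rfl) (by linarith)
    obtain ⟨y, rfl⟩ : (36 : ℤ) ∣ Y := by omega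
    have hy : 6 * y ^ 2 = x ^ 3 + 169 := by linarith
    refine cube_pos _ x (-1) ⟨0, 1⟩ ⟨13, y⟩ ?_ ?_ (Or.inr rfl) (by omega) (by omega) (by omega)
    · ext <;> simp [pow_succ] <;> ring
    · simp only [Zsqrtd.norm_def]; linarith
  · obtain ⟨x, rfl⟩ := h2
    obtain ⟨y, rfl, hy, hx2⟩ := two_case x Y 1 (Or.inl rfl) h'
    refine cube_pos _ x (-1) ⟨2, 1⟩ ⟨-(22 * y - 1053), -(429 - 9 * y)⟩ ?_ ?_ (Or.inr rfl) hx2 (by omega) (by omega)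
    · ext <;> simp [pow_succ] <;> ring
    · simp only [Zsqrtd.norm_def]; linarith
  · obtain ⟨x, rfl⟩ := h3
    obtain ⟨y, rfl, hy, hx3⟩ := three_case x Y 1 (Or.inl rfl) h'
    refine cube_pos _ x 1 ⟨3, 1⟩ ⟨27 * y - 572, 234 - 11 * y⟩ ?_ ?_ (Or.inl rfl) (by omega) hx3 (by omega)
    · ext <;> simp [pow_succ] <;> ring
    · simp only [Zsqrtd.norm_def]; linarith
  · refine cube_pos _ X 1 1 ⟨Y, 78⟩ ?_ ?_ (Or.inl rfl) h2 h3 h13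
    · simp
    · simp only [Zsqrtd.norm_def]; linarith

/-- Divisor equation for the negative case. -/
theorem neg_core {R : Type*} [CommRing R] (a A x m u v b f g h1 h2 : R)
    (hN : a * A = m ^ 2 * x ^ 3) (hco : u * x ^ 2 + v * (a - m * A) ^ 2 = 1)
    (hb : b = x * f + a * g) (hx : 2 * x = b * h1) (ha : 2 * a = b * h2) :
    ∃ c e : R, m ^ 2 * b ^ 3 = a * c ∧ 8 * a = b ^ 3 * e := by
  refine ⟨A * f ^ 3 + m ^ 2 * (3 * x ^ 2 * f ^ 2 * g + 3 * x * f * g ^ 2 * a + a ^ 2 * g ^ 3),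
    u * h1 ^ 2 * h2 + v * (h2 ^ 3 + h1 ^ 3 * (m ^ 4 * A - 2 * m ^ 3 * a)), ?_, ?_⟩
  · rw [hb]
    linear_combination (-f ^ 3) * hN
  · have e1 : 8 * a ^ 3 = b ^ 3 * h2 ^ 3 := by rw [← mul_pow, ← ha]; ring
    have e2 : 8 * x ^ 3 = b ^ 3 * h1 ^ 3 := by rw [← mul_pow, ← hx]; ring
    have e3 : 8 * (x ^ 2 * a) = b ^ 3 * (h1 ^ 2 * h2) := by
      have : b ^ 3 * (h1 ^ 2 * h2) = (b * h1) ^ 2 * (b * h2) := by ring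
      rw [this, ← hx, ← ha]; ring
    linear_combination (-8 * a) * hco + u * e3 + v * e1 + v * (m ^ 4 * A - 2 * m ^ 3 * a) * e2
      + 8 * v * (m ^ 2 * A - 2 * m * a) * hN

theorem norm_dvd_key : ∀ q ∈ Finset.Icc (-13 : ℤ) 13, ∀ p ∈ Finset.Icc (-32 : ℤ) 32,
    (p * p + 6 * q * q) ∣ 1024 → q = 0 := by
  decide +kernel

theorem no_sq_key : ∀ i ∈ Finset.range 5, ∀ Q ∈ Finset.Icc (-208 : ℤ) 208, Q ∣ 13 * 2 ^ i →
    ∀ P ∈ Finset.range 300,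
      Q * ((P : ℤ) ^ 2 - 2 * Q ^ 2) ≠ 13 * 2 ^ i ∧ Q * ((P : ℤ) ^ 2 - 2 * Q ^ 2) ≠ - (13 * 2 ^ i) := by
  decide +kernel

theorem no_sq (i : ℕ) (hi : i < 5) (P Q M : ℤ) (hM : M = 13 * 2 ^ i ∨ M = -(13 * 2 ^ i))
    (h : Q * (P ^ 2 - 2 * Q ^ 2) = M) : False := by
  have hd : Q ∣ 13 * 2 ^ i := by
    have : Q ∣ M := ⟨_, h.symm⟩
    rcases hM with hM | hM
    · rwa [← hM]
    · rw [hM] at this; exact (dvd_neg.mp this)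
  have hle : (13 * 2 ^ i : ℤ) ≤ 208 := by interval_cases i <;> norm_num
  have hpos : (0 : ℤ) < 13 * 2 ^ i := by positivity
  have hQ1 := Int.le_of_dvd hpos hd
  have hQ2 := Int.le_of_dvd hpos ((neg_dvd).mpr hd)
  have hQ0 : Q ≠ 0 := by
    rintro rfl
    rw [zero_dvd_iff] at hd
    omega
  have hM1 : M ≤ 208 ∧ -208 ≤ M := by rcases hM with h | h <;> rw [h] <;> constructor <;> linarith
  have hP : P ^ 2 - 2 * Q ^ 2 ≤ 208 := by
    by_contra hc
    push Not at hc
    rcases lt_or_gt_of_ne hQ0 with h0 | h0 <;> nlinarith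
  have hP2 : P ^ 2 < 300 ^ 2 := by nlinarith
  have hP3 := abs_lt_of_sq_lt_sq hP2 (by norm_num)
  have hk := no_sq_key i (Finset.mem_range.mpr hi) Q (Finset.mem_Icc.mpr ⟨by linarith, by linarith⟩) hd
    P.natAbs (Finset.mem_range.mpr (by zify; exact hP3))
  have e : ((P.natAbs : ℤ)) ^ 2 = P ^ 2 := Int.natAbs_sq P
  rw [e, h] at hk
  rcases hM with h | h
  · exact hk.1 h
  · exact hk.2 h

theorem neg_aux (Y x m : ℤ) (A : ℤ√(-6)) (hm : m = 1 ∨ m = 2)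
    (hA : (⟨Y, -78⟩ : ℤ√(-6)) = m * A) (hN : (⟨Y, 78⟩ : ℤ√(-6)) * A = (m : ℤ√(-6)) ^ 2 * (x : ℤ√(-6)) ^ 3)
    (h2 : ¬ (2 : ℤ) ∣ x) (h3 : ¬ (3 : ℤ) ∣ x) (h13 : ¬ (13 : ℤ) ∣ x) : False := by
  have hx0 : x ≠ 0 := by rintro rfl; simp at h2
  have hm0 : m ≠ 0 := by rcases hm with rfl | rfl <;> norm_num
  obtain ⟨u, v, huv⟩ := cop78 x h2 h3 h13 2 2 3 5
  have huv' : (u : ℤ√(-6)) * x ^ 2 + v * 146016 = 1 := by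
    have := congrArg (Int.cast : ℤ → ℤ√(-6)) huv
    push_cast at this
    linear_combination this
  have hw : ((⟨Y, 78⟩ : ℤ√(-6)) - m * A) ^ 2 = -146016 := by
    rw [← hA]
    ext <;> simp [pow_two]
  have hco : (u : ℤ√(-6)) * x ^ 2 + (-v) * ((⟨Y, 78⟩ : ℤ√(-6)) - m * A) ^ 2 = 1 := by
    rw [hw]; linear_combination huv'
  have hxz : (x : ℤ√(-6)) ≠ 0 := by exact_mod_cast hx0
  obtain ⟨b, f, g, h1, h2, hb, hx, ha⟩ := ideal_gen 2 app_neg (x : ℤ√(-6)) ⟨Y, 78⟩ hxz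
  obtain ⟨c, e, hc, he⟩ := neg_core (⟨Y, 78⟩ : ℤ√(-6)) A (x : ℤ√(-6)) m _ _ b f g h1 h2 hN hco hb
    (by exact_mod_cast hx) (by exact_mod_cast ha)
  have hec : c * e = ((8 * m ^ 2 : ℤ) : ℤ√(-6)) := by
    have h0 : ((m ^ 2 * x ^ 3 : ℤ) : ℤ√(-6)) * (c * e - ((8 * m ^ 2 : ℤ) : ℤ√(-6))) = 0 := by
      push_cast
      rw [← hN]
      linear_combination A * (-e * hc - m ^ 2 * he)
    have := cancel _ (mul_ne_zero (pow_ne_zero _ hm0) (pow_ne_zero _ hx0)) _ h0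
    linear_combination this
  have hnorm : c.norm ∣ 1024 := by
    have h1 : c.norm * e.norm = 8 * m ^ 2 * (8 * m ^ 2) := by
      rw [← Zsqrtd.norm_mul, hec, Zsqrtd.norm_intCast]
    have h2 : c.norm ∣ 8 * m ^ 2 * (8 * m ^ 2) := ⟨_, h1.symm⟩
    refine h2.trans ?_
    rcases hm with rfl | rfl <;> norm_num
  have hle := Int.le_of_dvd (by norm_num) hnorm
  have hnd : c.norm = c.re * c.re + 6 * c.im * c.im := by rw [Zsqrtd.norm_def]; ring
  rw [hnd] at hnorm hle
  have hre : c.re * c.re ≤ 1024 := by nlinarith [mul_self_nonneg c.im]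
  have hq := norm_dvd_key c.im (Finset.mem_Icc.mpr ⟨by nlinarith, by nlinarith⟩) c.re
    (Finset.mem_Icc.mpr ⟨by clear hle hnorm; nlinarith, by clear hle hnorm; nlinarith⟩) hnorm
  have hre := congrArg Zsqrtd.re hec
  have him := congrArg Zsqrtd.im hc
  have hcm : ((m : ℤ√(-6)) ^ 2) = ((m ^ 2 : ℤ) : ℤ√(-6)) := by push_cast; rfl
  rw [hcm] at him
  rw [Zsqrtd.re_intCast] at hre
  simp only [Zsqrtd.re_mul, Zsqrtd.im_mul, hq, pow_succ (n := 2), pow_two, Zsqrtd.re_intCast,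
    Zsqrtd.im_intCast] at hre him
  have heq : m ^ 2 * (b.im * (b.re ^ 2 - 2 * b.im ^ 2)) = 26 * c.re := by linarith
  have hp : c.re ∣ 8 * m ^ 2 := ⟨e.re, by linarith⟩
  have hpow : ∃ j : ℕ, j ≤ 5 ∧ (m = 1 → j ≤ 3) ∧ (c.re = 2 ^ j ∨ c.re = -(2 ^ j)) := by
    rcases hm with rfl | rfl
    · have h8 : c.re.natAbs ∣ 2 ^ 3 := by
        have := Int.natAbs_dvd_natAbs.mpr hp
        simpa using this
      obtain ⟨j, hj, hj2⟩ := (Nat.dvd_prime_pow Nat.prime_two).mp h8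
      refine ⟨j, by omega, fun _ => hj, ?_⟩
      have := Int.natAbs_eq c.re
      rw [hj2] at this
      simpa using this
    · have h8 : c.re.natAbs ∣ 2 ^ 5 := by
        have := Int.natAbs_dvd_natAbs.mpr hp
        simpa using this
      obtain ⟨j, hj, hj2⟩ := (Nat.dvd_prime_pow Nat.prime_two).mp h8
      refine ⟨j, hj, by norm_num, ?_⟩
      have := Int.natAbs_eq c.re
      rw [hj2] at this
      simpa using this
  obtain ⟨j, hj5, hj3, hj⟩ := hpow
  generalize c.re = p at *
  generalize b.re = P at *
  generalize b.im = Q at *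
  rcases hm with rfl | rfl
  · refine no_sq (j + 1) (by have := hj3 rfl; omega) P Q (26 * p) ?_ (by linarith)
    rw [pow_succ]
    rcases hj with hj | hj <;> rw [hj]
    · left; ring
    · right; ring
  · rcases j with _ | j
    · rw [pow_zero] at hj; omega
    · rw [pow_succ] at hj
      refine no_sq j (by omega) P Q (Q * (P ^ 2 - 2 * Q ^ 2)) ?_ rfl
      generalize Q * (P ^ 2 - 2 * Q ^ 2) = R at *
      rcases hj with hj | hj
      · left; linarith
      · right; linarith

theorem neg_main (X Y : ℤ) (h : Y ^ 2 = X ^ 3 - 36504) : False := by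
  have h' : Y ^ 2 = X ^ 3 + (-1) * 36504 := by linarith
  have h13 := not13 X Y (-1) (Or.inr rfl) h'
  have h3 : ¬ (3 : ℤ) ∣ X := by
    rintro ⟨x, rfl⟩
    obtain ⟨y, -, hy, hx⟩ := three_case x Y (-1) (Or.inr rfl) h'
    have h1 : x ^ 3 % 9 = 1 ∨ x ^ 3 % 9 = 8 := by
      have : x % 9 = 1 ∨ x % 9 = 2 ∨ x % 9 = 4 ∨ x % 9 = 5 ∨ x % 9 = 7 ∨ x % 9 = 8 := by omega
      rcases this with h | h | h | h | h | h <;> simp [pow_succ, Int.mul_emod, h]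
    have h2 : y ^ 2 % 3 = 0 ∨ y ^ 2 % 3 = 1 := by
      have : y % 3 = 0 ∨ y % 3 = 1 ∨ y % 3 = 2 := by omega
      rcases this with h | h | h <;> simp [pow_succ, Int.mul_emod, h]
    omega
  by_cases h2 : (2 : ℤ) ∣ X
  · obtain ⟨x, rfl⟩ := h2
    obtain ⟨y, rfl, hy, hx⟩ := two_case x Y (-1) (Or.inr rfl) h'
    refine neg_aux (4 * y) x 2 ⟨2 * y, -39⟩ (Or.inr rfl) ?_ ?_ hx (by omega) (by omega)
    · ext <;> simp <;> ring
    · have : ((2 : ℤ) : ℤ√(-6)) ^ 2 * (x : ℤ√(-6)) ^ 3 = ((2 ^ 2 * x ^ 3 : ℤ) : ℤ√(-6)) := by push_cast; rfl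
      rw [this]
      ext
      · rw [Zsqrtd.re_intCast, Zsqrtd.re_mul]; linarith
      · rw [Zsqrtd.im_intCast, Zsqrtd.im_mul]; linarith
  · refine neg_aux Y X 1 ⟨Y, -78⟩ (Or.inl rfl) ?_ ?_ h2 h3 h13
    · ext <;> simp
    · have : ((1 : ℤ) : ℤ√(-6)) ^ 2 * (X : ℤ√(-6)) ^ 3 = ((X ^ 3 : ℤ) : ℤ√(-6)) := by push_cast; ring
      rw [this]
      ext
      · rw [Zsqrtd.re_intCast, Zsqrtd.re_mul]; linarith
      · rw [Zsqrtd.im_intCast, Zsqrtd.im_mul]; linarith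

end QuadAux

theorem thue_form (P Q : ℤ) (h : 5 * (3 * P ^ 2 * Q + 6 * Q ^ 3) + 2 * (P ^ 3 + 18 * P * Q ^ 2) = 78) :
    P = 6 ∧ Q = -1 := by
  have h3 : (3 : ℤ) ∣ P := by
    apply Int.prime_three.dvd_of_dvd_pow (n := 3)
    have : 2 * P ^ 3 = 3 * (26 - 5 * (P ^ 2 * Q + 2 * Q ^ 3) - 12 * (P * Q ^ 2)) := by linarith
    omega
  obtain ⟨w, rfl⟩ := h3
  obtain ⟨h1, h2⟩ := CubicOrd.thue Q (w + Q) (by linarith)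
  omega

theorem cube30 (X : ℤ) (h : X ^ 3 = 27000) : X = 30 := by
  have h1 : X < 31 := by by_contra hc; push Not at hc; nlinarith [mul_self_nonneg X, mul_self_nonneg (X - 31)]
  have h2 : 29 < X := by
    by_contra hc; push Not at hc
    nlinarith [mul_self_nonneg X, mul_self_nonneg (X + 29), mul_self_nonneg (X + 30)]
  omega

theorem pos_main (X Y : ℤ) (h : Y ^ 2 = X ^ 3 + 36504) : X = 30 ∧ (Y = 252 ∨ Y = -252) := by
  obtain ⟨E, B, hE, hB⟩ := QuadAux.alpha_form X Y h
  have hY : Y = 252 ∨ Y = -252 := by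
    have hre := congrArg Zsqrtd.re hB
    have him := congrArg Zsqrtd.im hB
    generalize hP : B.re = P at *
    generalize hQ : B.im = Q at *
    rcases hE with rfl | rfl | rfl
    · exfalso
      simp only [pow_succ, pow_zero, one_mul, Zsqrtd.im_mul, Zsqrtd.re_mul, hP, hQ] at him
      have h1 : Q * (P ^ 2 + 2 * Q ^ 2) = 26 := by linarith
      have hQ0 : 0 < Q := by
        by_contra hc
        push Not at hc
        nlinarith [sq_nonneg P, sq_nonneg Q]
      have hQ3 : Q < 3 := by
        by_contra hc
        push Not at hc
        nlinarith [sq_nonneg P, sq_nonneg Q, mul_nonneg hQ0.le (sq_nonneg P)]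
      have hPl : P < 6 := by nlinarith
      have hPu : -6 < P := by nlinarith
      interval_cases Q <;> interval_cases P <;> omega
    · simp only [pow_succ, pow_zero, one_mul, Zsqrtd.im_mul, Zsqrtd.re_mul, hP, hQ] at him hre
      obtain ⟨rfl, rfl⟩ := thue_form P Q (by linarith)
      left; linarith
    · simp only [pow_succ, pow_zero, one_mul, Zsqrtd.im_mul, Zsqrtd.re_mul, hP, hQ] at him hre
      obtain ⟨h1, rfl⟩ := thue_form (-P) Q (by linarith)
      obtain rfl : P = -6 := by omega
      right; linarith
  refine ⟨cube30 X ?_, hY⟩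
  rcases hY with rfl | rfl <;> linarith

theorem stmt_13 :
    (∀ X Y : ℤ, Y ^ 2 = X ^ 3 + 36504 ↔ (X = 30 ∧ Y = 252) ∨ (X = 30 ∧ Y = -252)) ∧
    (¬ ∃ X Y : ℤ, Y ^ 2 = X ^ 3 - 36504) := by
  refine ⟨fun X Y => ⟨fun h => ?_, ?_⟩, ?_⟩
  · obtain ⟨hX, hY | hY⟩ := pos_main X Y h
    · exact Or.inl ⟨hX, hY⟩
    · exact Or.inr ⟨hX, hY⟩
  · rintro (⟨rfl, rfl⟩ | ⟨rfl, rfl⟩) <;> norm_num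
  · rintro ⟨X, Y, h⟩
    exact QuadAux.neg_main X Y h
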